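/- arXiv:2009.12107 — 3 statements merged into one kernel-verified Lean document; each statement's English description precedes it below -/
import Mathlib

section
/- For every commutative ring R, every n ≥ 0, and all vectors v, w ∈ R^{n+1}, the Suslin matrix satisfies S_n(v,w)·S̄_n(v,w) = S̄_n(v,w)·S_n(v,w) = (v·wᵀ)·I_{2^n}, where v·wᵀ denotes the standard inner product Σ aᵢbᵢ. -/
open Matrix

noncomputable section

/-- Reindexing equivalence `Fin (2 ^ n) ⊕ Fin (2 ^ n) ≃ Fin (2 ^ (n + 1))`. -/
def pow2Equiv (n : ℕ) : Fin (2 ^ n) ⊕ Fin (2 ^ n) ≃ Fin (2 ^ (n + 1)) :=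
  finSumFinEquiv.trans (finCongr (by rw [pow_succ]; ring))

/-- The Suslin matrix `S_n(v, w)` of size `2 ^ n` associated to `v, w : Fin (n+1) → R`. -/
def sus (R : Type) [CommRing R] : (n : ℕ) → (Fin (n + 1) → R) → (Fin (n + 1) → R) →
    Matrix (Fin (2 ^ n)) (Fin (2 ^ n)) R
  | 0, v, _ => v 0 • 1
  | n + 1, v, w =>
      Matrix.reindex (pow2Equiv n) (pow2Equiv n)
        (Matrix.fromBlocks (v 0 • 1) (sus R n (v ∘ Fin.succ) (w ∘ Fin.succ))
          (-(sus R n (w ∘ Fin.succ) (v ∘ Fin.succ))ᵀ) (w 0 • 1))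

/-- The conjugate Suslin matrix `S̄_n(v, w) = S_n(w, v)ᵀ`. -/
def susBar (R : Type) [CommRing R] (n : ℕ) (v w : Fin (n + 1) → R) :
    Matrix (Fin (2 ^ n)) (Fin (2 ^ n)) R :=
  (sus R n w v)ᵀ

/-- Suslin's matrices `J_n`. -/
def Jmat (R : Type) [CommRing R] : (n : ℕ) → Matrix (Fin (2 ^ n)) (Fin (2 ^ n)) R
  | 0 => 1
  | n + 1 =>
      if Even (n + 1) then
        Matrix.reindex (pow2Equiv n) (pow2Equiv n)
          (Matrix.fromBlocks (Jmat R n) 0 0 (-(Jmat R n)))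
      else
        Matrix.reindex (pow2Equiv n) (pow2Equiv n)
          (Matrix.fromBlocks 0 (Jmat R n) (-(Jmat R n)) 0)

/-- The involution `M ↦ M* = J_n · Mᵀ · J_nᵀ`. -/
def invol (R : Type) [CommRing R] (n : ℕ) (M : Matrix (Fin (2 ^ n)) (Fin (2 ^ n)) R) :
    Matrix (Fin (2 ^ n)) (Fin (2 ^ n)) R :=
  Jmat R n * Mᵀ * (Jmat R n)ᵀ

/-- `φ(v, w) = [[0, S_n(v,w)], [S̄_n(v,w), 0]]` (note the shift: vectors in `R^{n+1}`,
matrices of size `2 ^ (n + 1)`). -/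
def phiMat (R : Type) [CommRing R] (n : ℕ) (v w : Fin (n + 1) → R) :
    Matrix (Fin (2 ^ (n + 1))) (Fin (2 ^ (n + 1))) R :=
  Matrix.reindex (pow2Equiv n) (pow2Equiv n)
    (Matrix.fromBlocks 0 (sus R n v w) (susBar R n v w) 0)

/-- The set of Suslin matrices of size `2 ^ m`. -/
def SuslinSet (R : Type) [CommRing R] (m : ℕ) : Set (Matrix (Fin (2 ^ m)) (Fin (2 ^ m)) R) :=
  {S | ∃ v w : Fin (m + 1) → R, S = sus R m v w}

/-- The image of the hyperbolic space `R^{m+1} ⊕ R^{m+1}` inside the Clifford algebra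
`M_{2^{m+1}}(R)`. -/
def PhiSet (R : Type) [CommRing R] (m : ℕ) :
    Set (Matrix (Fin (2 ^ (m + 1))) (Fin (2 ^ (m + 1))) R) :=
  {x | ∃ v w : Fin (m + 1) → R, x = phiMat R m v w}

/-- The block diagonal matrix `diag(g₁, g₂)`. -/
def diagBlock (R : Type) [CommRing R] (m : ℕ)
    (g₁ g₂ : Matrix (Fin (2 ^ m)) (Fin (2 ^ m)) R) :
    Matrix (Fin (2 ^ (m + 1))) (Fin (2 ^ (m + 1))) R :=
  Matrix.reindex (pow2Equiv m) (pow2Equiv m) (Matrix.fromBlocks g₁ 0 0 g₂)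

/-- `Spin_{2(m+1)}(R)`, as the set of pairs `(g₁, g₂)` such that `x = diag(g₁, g₂)`
satisfies `x · x* = 1` and conjugation by `x` maps the image of the hyperbolic space
onto itself. -/
def SpinPair (R : Type) [CommRing R] (m : ℕ) :
    Set (Matrix (Fin (2 ^ m)) (Fin (2 ^ m)) R × Matrix (Fin (2 ^ m)) (Fin (2 ^ m)) R) :=
  {p | IsUnit p.1 ∧ IsUnit p.2 ∧
    diagBlock R m p.1 p.2 * invol R (m + 1) (diagBlock R m p.1 p.2) = 1 ∧
    (fun y => diagBlock R m p.1 p.2 * y * (diagBlock R m p.1 p.2)⁻¹) '' PhiSet R m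
      = PhiSet R m}

/-- The group `G_m(R)` of `g ∈ GL_{2^m}(R)` such that `g · S · g*` is a Suslin matrix
for every Suslin matrix `S`. -/
def GSet (R : Type) [CommRing R] (m : ℕ) : Set (Matrix (Fin (2 ^ m)) (Fin (2 ^ m)) R) :=
  {g | IsUnit g ∧ ∀ S ∈ SuslinSet R m, g * S * invol R m g ∈ SuslinSet R m}

/-- The group `SG_m(R)` of `g ∈ G_m(R)` preserving the length `l(S(v,w)) = v ⬝ᵥ w`. -/
def SGSet (R : Type) [CommRing R] (m : ℕ) : Set (Matrix (Fin (2 ^ m)) (Fin (2 ^ m)) R) :=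
  {g | g ∈ GSet R m ∧ ∀ v w v' w' : Fin (m + 1) → R,
    g * sus R m v w * invol R m g = sus R m v' w' → v' ⬝ᵥ w' = v ⬝ᵥ w}

/-- The hyperbolic quadratic form `q(v, w) = v ⬝ᵥ w` on `R^n ⊕ R^n`. -/
def hypForm (R : Type) [CommRing R] (n : ℕ) :
    QuadraticForm R ((Fin n → R) × (Fin n → R)) :=
  LinearMap.BilinMap.toQuadraticMap
    (LinearMap.mk₂ R (fun x y => x.1 ⬝ᵥ y.2)
      (fun x x' y => by simp [add_dotProduct])
      (fun c x y => by simp [smul_dotProduct])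
      (fun x y y' => by simp [dotProduct_add])
      (fun x c y => by simp [dotProduct_smul]))

/-- `E_i = S_m(e_i, 0)`. -/
def Emat (R : Type) [CommRing R] (m : ℕ) (i : Fin (m + 1)) :
    Matrix (Fin (2 ^ m)) (Fin (2 ^ m)) R :=
  sus R m (Pi.single i 1) 0

/-- `F_i = S_m(0, e_i)`. -/
def Fmat (R : Type) [CommRing R] (m : ℕ) (i : Fin (m + 1)) :
    Matrix (Fin (2 ^ m)) (Fin (2 ^ m)) R :=
  sus R m 0 (Pi.single i 1)

/-! Write `S_{n+1}(v, w) = [[a, A], [-B, b]]` with `a = v 0`, `b = w 0`, `A = S_n(v₁, w₁)` and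
`B = S̄_n(v₁, w₁)`. Its conjugate is `[[b, -A], [B, a]]`. Scalars commute with `A` and `B`, so the
off-diagonal blocks of both products cancel, while the diagonal blocks are `a b + A B` and
`a b + B A`; induction on `n` turns both into `a b + v₁ ⬝ᵥ w₁ = v ⬝ᵥ w`. -/

theorem fromBlocks_smul_one_mul_fromBlocks_smul_one {l m R S : Type*}
    [Fintype l] [Fintype m] [DecidableEq l] [DecidableEq m]
    [CommSemiring R] [Ring S] [Algebra R S] (a b : R) {c : R}
    {A : Matrix l m S} {B : Matrix m l S} (hAB : A * B = c • 1) (hBA : B * A = c • 1) :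
    fromBlocks (a • 1) A (-B) (b • 1) * fromBlocks (b • 1) (-A) B (a • 1) =
      (a * b + c) • (1 : Matrix (l ⊕ m) (l ⊕ m) S) := by
  calc
    _ = fromBlocks ((a * b) • 1 + A * B) 0 0 ((a * b) • 1 + B * A) := by
      rw [fromBlocks_multiply]
      congr 1 <;> simp [smul_smul, mul_comm, add_comm]
    _ = (a * b + c) • 1 := by
      rw [hAB, hBA, ← add_smul, ← add_smul, ← fromBlocks_one, fromBlocks_smul, smul_zero, smul_zero]

theorem reindex_mul_reindex_of_mul_eq_smul_one {k l m n R S : Type*}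
    [Fintype k] [Fintype l] [DecidableEq m] [DecidableEq n] [NonAssocSemiring S] [SMul R S]
    (e : m ≃ n) (f : l ≃ k) {c : R} {M : Matrix m l S} {N : Matrix l m S} (h : M * N = c • 1) :
    reindex e f M * reindex f e N = c • 1 := by
  simp only [reindex_apply, submatrix_mul_equiv, h, submatrix_smul, Pi.smul_apply,
    submatrix_one_equiv]

theorem dotProduct_fin_succ {R : Type*} [Mul R] [AddCommMonoid R] {n : ℕ}
    (v w : Fin (n + 1) → R) : v ⬝ᵥ w = v 0 * w 0 + (v ∘ Fin.succ) ⬝ᵥ (w ∘ Fin.succ) :=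
  Fin.sum_univ_succ _

section

variable (R : Type) [CommRing R] (n : ℕ) (v w : Fin (n + 1 + 1) → R)

theorem sus_succ :
    sus R (n + 1) v w = reindex (pow2Equiv n) (pow2Equiv n)
      (fromBlocks (v 0 • 1) (sus R n (v ∘ Fin.succ) (w ∘ Fin.succ))
        (-susBar R n (v ∘ Fin.succ) (w ∘ Fin.succ)) (w 0 • 1)) :=
  rfl

theorem susBar_succ :
    susBar R (n + 1) v w = reindex (pow2Equiv n) (pow2Equiv n)
      (fromBlocks (w 0 • 1) (-sus R n (v ∘ Fin.succ) (w ∘ Fin.succ))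
        (susBar R n (v ∘ Fin.succ) (w ∘ Fin.succ)) (v 0 • 1)) := by
  simp [susBar, sus, fromBlocks_transpose]

end

/-- For every commutative ring `R`, every `n ≥ 0` and all `v, w ∈ R^{n+1}`,
`S_n(v,w) · S̄_n(v,w) = S̄_n(v,w) · S_n(v,w) = (v ⬝ᵥ w) • 1`. -/
theorem suslin_mul_conj (R : Type) [CommRing R] (n : ℕ) (v w : Fin (n + 1) → R) :
    sus R n v w * susBar R n v w = (v ⬝ᵥ w) • (1 : Matrix (Fin (2 ^ n)) (Fin (2 ^ n)) R) ∧
    susBar R n v w * sus R n v w = (v ⬝ᵥ w) • (1 : Matrix (Fin (2 ^ n)) (Fin (2 ^ n)) R) := by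
  induction n with
  | zero => simp [sus, susBar, dotProduct, smul_smul, mul_comm]
  | succ n ih =>
    obtain ⟨hAB, hBA⟩ := ih (v ∘ Fin.succ) (w ∘ Fin.succ)
    rw [sus_succ, susBar_succ, dotProduct_fin_succ]
    constructor
    · exact reindex_mul_reindex_of_mul_eq_smul_one _ _
        (fromBlocks_smul_one_mul_fromBlocks_smul_one (v 0) (w 0) hAB hBA)
    · apply reindex_mul_reindex_of_mul_eq_smul_one
      -- The second product is the first with `(a, b, A, B)` replaced by `(b, a, -A, -B)`.
      simpa only [neg_neg, mul_comm (w 0)] using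
        fromBlocks_smul_one_mul_fromBlocks_smul_one (w 0) (v 0)
          ((neg_mul_neg _ _).trans hAB) ((neg_mul_neg _ _).trans hBA)
end
end

section
/- For every commutative ring R and every n ≥ 0, the matrix J_n ∈ M_{2^n}(R) satisfies det J_n = 1, J_nᵀ = J_n^{−1}, and J_nᵀ = (−1)^{n(n+1)/2}·J_n; in particular J_n is skew-symmetric when n ≡ 1 or 2 (mod 4) and symmetric when n ≡ 0 or 3 (mod 4). -/
open Matrix

noncomputable section

/-!
The block recursion transports each property from `J_n` to `J_{n+1}`. If `J_nᵀ = ε • J_n`, then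
the off-diagonal step, taken for even `n`, replaces `ε` by `-ε`, while the diagonal step, taken for
odd `n`, keeps it; hence `ε = ∏_{k ≤ n} (-1)^k`. Both steps square the determinant, the diagonal
one up to the factor `(-1)^{2^n}`, which is `1` because `n ≥ 1` there.
-/

theorem det_fromBlocks_zero_neg_zero {R m : Type*} [CommRing R] [Fintype m] [DecidableEq m]
    (B C : Matrix m m R) : (fromBlocks 0 B (-C) 0).det = B.det * C.det := by
  have column_operations : fromBlocks 0 B (-C) 0 =
      fromBlocks B 0 (-C) C * fromBlocks 1 1 0 1 * fromBlocks 1 0 (-1) 1 := by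
    simp [fromBlocks_multiply]
  rw [column_operations, det_mul, det_mul, det_fromBlocks_zero₁₂, det_fromBlocks_zero₂₁,
    det_fromBlocks_zero₁₂, det_one, mul_one, mul_one, mul_one]

theorem transpose_fromBlocks_zero_neg_zero {S α m : Type*} [Ring S] [AddCommGroup α] [Module S α]
    {A : Matrix m m α} {ε : S} (hA : Aᵀ = ε • A) :
    (fromBlocks 0 A (-A) 0)ᵀ = -ε • fromBlocks 0 A (-A) 0 := by
  rw [fromBlocks_transpose, fromBlocks_smul, transpose_neg, transpose_zero, hA, smul_zero,
    neg_smul, neg_smul, smul_neg, neg_neg]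

theorem transpose_fromBlocks_self_zero_zero_neg {S α m : Type*} [Monoid S] [AddGroup α]
    [DistribMulAction S α] {A : Matrix m m α} {ε : S} (hA : Aᵀ = ε • A) :
    (fromBlocks A 0 0 (-A))ᵀ = ε • fromBlocks A 0 0 (-A) := by
  rw [fromBlocks_transpose, fromBlocks_smul, transpose_neg, transpose_zero, hA, smul_zero,
    smul_neg]

theorem triangle_succ (n : ℕ) :
    (n + 1) * (n + 1 + 1) / 2 = n * (n + 1) / 2 + (n + 1) := by
  simpa only [Nat.add_sub_cancel, mul_comm] using Nat.triangle_succ (n + 1)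

theorem even_triangle_iff (n : ℕ) : Even (n * (n + 1) / 2) ↔ n % 4 = 0 ∨ n % 4 = 3 := by
  induction n with
  | zero => simp
  | succ n ih =>
    rw [triangle_succ, Nat.even_add, ih, Nat.even_iff]
    lia

theorem odd_triangle_iff (n : ℕ) : Odd (n * (n + 1) / 2) ↔ n % 4 = 1 ∨ n % 4 = 2 := by
  rw [← Nat.not_even_iff_odd, even_triangle_iff]
  lia

section Jmat

variable (R : Type) [CommRing R] {n : ℕ}

theorem Jmat_succ_of_even (hn : Even n) :
    Jmat R (n + 1) =
      reindex (pow2Equiv n) (pow2Equiv n) (fromBlocks 0 (Jmat R n) (-Jmat R n) 0) := by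
  rw [Jmat, if_neg (Nat.not_even_iff_odd.mpr hn.add_one)]

theorem Jmat_succ_of_odd (hn : Odd n) :
    Jmat R (n + 1) =
      reindex (pow2Equiv n) (pow2Equiv n) (fromBlocks (Jmat R n) 0 0 (-Jmat R n)) := by
  rw [Jmat, if_pos hn.add_one]

theorem det_Jmat (n : ℕ) : (Jmat R n).det = 1 := by
  induction n with
  | zero => exact det_one
  | succ n ih =>
    rcases n.even_or_odd with hn | hn
    · rw [Jmat_succ_of_even R hn, det_reindex_self, det_fromBlocks_zero_neg_zero, ih, mul_one]
    · have even_size : Even (2 ^ n) := even_two.pow_of_ne_zero hn.pos.ne'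
      rw [Jmat_succ_of_odd R hn, det_reindex_self, det_fromBlocks_zero₂₁, det_neg,
        Fintype.card_fin, even_size.neg_one_pow, ih, mul_one, mul_one]

theorem Jmat_mul_transpose (n : ℕ) : Jmat R n * (Jmat R n)ᵀ = 1 := by
  induction n with
  | zero => simp [Jmat]
  | succ n ih =>
    rcases n.even_or_odd with hn | hn
    · simp [Jmat_succ_of_even R hn, fromBlocks_transpose, submatrix_mul_equiv,
        fromBlocks_multiply, ih]
    · simp [Jmat_succ_of_odd R hn, fromBlocks_transpose, submatrix_mul_equiv,
        fromBlocks_multiply, ih]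

theorem transpose_Jmat (n : ℕ) :
    (Jmat R n)ᵀ = (-1 : R) ^ (n * (n + 1) / 2) • Jmat R n := by
  induction n with
  | zero => simp [Jmat]
  | succ n ih =>
    rw [triangle_succ, pow_add (-1 : R)]
    rcases n.even_or_odd with hn | hn
    · rw [hn.add_one.neg_one_pow, mul_neg_one, Jmat_succ_of_even R hn, transpose_reindex,
        transpose_fromBlocks_zero_neg_zero ih]
      simp only [reindex_apply, submatrix_smul, Pi.smul_apply]
    · rw [hn.add_one.neg_one_pow, mul_one, Jmat_succ_of_odd R hn, transpose_reindex,
        transpose_fromBlocks_self_zero_zero_neg ih]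
      simp only [reindex_apply, submatrix_smul, Pi.smul_apply]

end Jmat

/-- `det J_n = 1`, `J_nᵀ = J_n⁻¹` and `J_nᵀ = (-1)^{n(n+1)/2} • J_n`;
in particular `J_n` is skew-symmetric when `n ≡ 1, 2 (mod 4)` and symmetric when
`n ≡ 0, 3 (mod 4)`. -/
theorem Jmat_props (R : Type) [CommRing R] (n : ℕ) :
    (Jmat R n).det = 1 ∧
    (Jmat R n)ᵀ = (Jmat R n)⁻¹ ∧
    (Jmat R n)ᵀ = ((-1 : R) ^ (n * (n + 1) / 2)) • Jmat R n ∧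
    ((n % 4 = 1 ∨ n % 4 = 2) → (Jmat R n)ᵀ = -(Jmat R n)) ∧
    ((n % 4 = 0 ∨ n % 4 = 3) → (Jmat R n)ᵀ = Jmat R n) := by
  refine ⟨det_Jmat R n, (inv_eq_right_inv (Jmat_mul_transpose R n)).symm,
    transpose_Jmat R n, fun skew => ?_, fun symmetric => ?_⟩
  · rw [transpose_Jmat, ((odd_triangle_iff n).mpr skew).neg_one_pow, neg_one_smul]
  · rw [transpose_Jmat, ((even_triangle_iff n).mpr symmetric).neg_one_pow, one_smul]
end
end

section
/- Let R be a commutative ring, n ≥ 1, A an associative unital R-algebra in which R embeds (the structure map R → A is injective), ι : R^n ⊕ R^n → A an injective R-linear map, and α : R^n ⊕ R^n → R^n ⊕ R^n an isometry of the quadratic form q(v,w) = v·wᵀ such that ι(x)·ι(α(x)) = ι(α(x))·ι(x) = q(x)·1_A for all x ∈ R^n ⊕ R^n. Then the R-algebra homomorphism φ : Cl → M_2(A) extending the linear map x ↦ [[0, ι(x)], [ι(α(x)), 0]] is injective. -/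
open Matrix

noncomputable section

/-!
Every algebra map `Cl(Hⁿ) → D` that is injective on the scalars `R` is injective, where `H` is the
hyperbolic plane spanned by null vectors `e`, `f`. Since `e² = f² = 0` and `ef + fe = 1`, the
products `ef, e, f, fe` are `2 × 2` matrix units in `Cl(H ⊥ Q)`. The element `u = ef - fe` satisfies
`u² = 1`, anticommutes with `e` and `f`, and commutes with the vectors `m` of `Q`, so `m ↦ m u`
preserves squares and lands in the centralizer of these matrix units. Hence `Cl(H ⊥ Q)` is a
quotient of `M₂(Cl(Q))`, and a map out of a matrix ring is injective as soon as it is injective on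
scalar matrices. Splitting off hyperbolic planes one at a time reduces to `Cl(0) = R`.
-/

section MatrixUnits

variable {n : Type*} [Fintype n] [DecidableEq n]

theorem matrixHom_injective_of_comp_scalar {C D : Type*} [Semiring C] [Semiring D]
    (f : Matrix n n C →+* D) (hf : Function.Injective (f.comp (Matrix.scalar n))) :
    Function.Injective f := by
  have scalar_entry (M : Matrix n n C) (i j : n) :
      Matrix.scalar n (M i j) = ∑ k, single k i 1 * M * single j k 1 := by
    simp_rw [single_mul_mul_single, one_mul, mul_one, sum_single_eq_diagonal, scalar_apply]
  intro M N hMN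
  ext i j
  apply hf
  simp only [RingHom.comp_apply, scalar_entry, map_sum, map_mul, hMN]

/-- A full system of `n × n` matrix units of a ring `B`, collected in a matrix over `B`. -/
structure IsMatrixUnits {B : Type*} [Semiring B] (e : Matrix n n B) : Prop where
  mul_eq : ∀ i j k l, e i j * e k l = if j = k then e i l else 0
  sum_diag : ∑ i, e i i = 1

/-- The algebra map `Mₙ(C) → B` extending an algebra map `C → B` whose range commutes with a full
system of matrix units `e` of `B`. -/
def matrixUnitsLift {R C B : Type*} [CommSemiring R] [Semiring C] [Algebra R C] [Semiring B]
    [Algebra R B] (f : C →ₐ[R] B) {e : Matrix n n B} (he : IsMatrixUnits e)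
    (hfe : ∀ c i j, Commute (f c) (e i j)) : Matrix n n C →ₐ[R] B :=
  AlgHom.ofLinearMap
    { toFun M := ∑ i, ∑ j, f (M i j) * e i j
      map_add' M N := by simp [add_mul, Finset.sum_add_distrib]
      map_smul' r M := by simp [Finset.smul_sum] }
    (by simp [one_apply, apply_ite f, ite_mul, he.sum_diag])
    fun M N => by
      have unit_mul (i k l j : n) : f (M i k) * e i k * (f (N l j) * e l j) =
          if k = l then f (M i k) * f (N l j) * e i j else 0 := by
        rw [(hfe _ i k).symm.mul_mul_mul_comm, he.mul_eq, mul_ite, mul_zero]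
      calc ∑ i, ∑ j, f ((M * N) i j) * e i j
          = ∑ i, ∑ j, ∑ k, f (M i k) * f (N k j) * e i j := by
            simp only [mul_apply, map_sum, map_mul, Finset.sum_mul]
        _ = ∑ i, ∑ k, ∑ j, f (M i k) * f (N k j) * e i j :=
            Finset.sum_congr rfl fun _ _ => Finset.sum_comm
        _ = ∑ i, ∑ k, ∑ l, ∑ j, f (M i k) * e i k * (f (N l j) * e l j) := by
            simp [unit_mul, Finset.sum_ite_irrel]
        _ = (∑ i, ∑ k, f (M i k) * e i k) * ∑ l, ∑ j, f (N l j) * e l j := by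
            simp only [Finset.sum_mul]
            simp only [Finset.mul_sum]

theorem matrixUnitsLift_apply {R C B : Type*} [CommSemiring R] [Semiring C] [Algebra R C]
    [Semiring B] [Algebra R B] (f : C →ₐ[R] B) {e : Matrix n n B} (he : IsMatrixUnits e)
    (hfe : ∀ c i j, Commute (f c) (e i j)) (M : Matrix n n C) :
    matrixUnitsLift f he hfe M = ∑ i, ∑ j, f (M i j) * e i j :=
  rfl

end MatrixUnits

section HyperbolicPair

variable {B : Type*} [Ring B]

theorem ring_lie_swap (x y : B) : ⁅x, y⁆ = -⁅y, x⁆ :=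
  (neg_sub (y * x) (x * y)).symm

/-- Two elements of a ring satisfying the Clifford relations of a pair of null vectors that span a
hyperbolic plane. -/
structure IsHyperbolicPair (e f : B) : Prop where
  mul_self_left : e * e = 0
  mul_self_right : f * f = 0
  mul_add_swap : e * f + f * e = 1

namespace IsHyperbolicPair

variable {e f v : B}

theorem symm (h : IsHyperbolicPair e f) : IsHyperbolicPair f e :=
  ⟨h.mul_self_right, h.mul_self_left, by rw [add_comm, h.mul_add_swap]⟩

theorem mul_mul_cancel (h : IsHyperbolicPair e f) : e * f * e = e := by
  rw [eq_sub_of_add_eq h.mul_add_swap, sub_mul, mul_assoc, h.mul_self_left, mul_zero, one_mul,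
    sub_zero]

theorem isMatrixUnits (h : IsHyperbolicPair e f) : IsMatrixUnits !![e * f, e; f, f * e] where
  mul_eq := by
    have hee (x : B) : x * e * e = 0 := by rw [mul_assoc, h.mul_self_left, mul_zero]
    have hff (x : B) : x * f * f = 0 := by rw [mul_assoc, h.mul_self_right, mul_zero]
    simp [Fin.forall_fin_two, ← mul_assoc, h.mul_self_left, h.mul_self_right, hee, hff,
      h.mul_mul_cancel, h.symm.mul_mul_cancel]
  sum_diag := by simpa using h.mul_add_swap

theorem lie_mul_left (h : IsHyperbolicPair e f) : ⁅e, f⁆ * e = e := by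
  rw [Ring.lie_def, sub_mul, h.mul_mul_cancel, mul_assoc, h.mul_self_left, mul_zero, sub_zero]

theorem mul_lie_left (h : IsHyperbolicPair e f) : e * ⁅e, f⁆ = -e := by
  rw [Ring.lie_def, mul_sub, ← mul_assoc, ← mul_assoc, h.mul_mul_cancel, h.mul_self_left, zero_mul,
    zero_sub]

theorem lie_mul_right (h : IsHyperbolicPair e f) : ⁅e, f⁆ * f = -f := by
  rw [ring_lie_swap, neg_mul, h.symm.lie_mul_left]

theorem lie_mul_lie (h : IsHyperbolicPair e f) : ⁅e, f⁆ * ⁅e, f⁆ = 1 := by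
  conv_lhs => rw [Ring.lie_def e f, mul_sub, ← mul_assoc, ← mul_assoc, ← Ring.lie_def]
  rw [h.lie_mul_left, h.lie_mul_right, neg_mul, sub_neg_eq_add, h.mul_add_swap]

theorem commute_mul_lie_left (h : IsHyperbolicPair e f) (hve : e * v = -(v * e)) :
    Commute (v * ⁅e, f⁆) e := by
  rw [commute_iff_eq, mul_assoc, h.lie_mul_left, ← mul_assoc, hve, neg_mul, mul_assoc,
    h.mul_lie_left, mul_neg, neg_neg]

theorem commute_mul_lie_right (h : IsHyperbolicPair e f) (hvf : f * v = -(v * f)) :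
    Commute (v * ⁅e, f⁆) f := by
  rw [ring_lie_swap, mul_neg]
  exact (h.symm.commute_mul_lie_left hvf).neg_left

end IsHyperbolicPair

theorem commute_lie_of_anticommute {e f v : B} (hve : e * v = -(v * e)) (hvf : f * v = -(v * f)) :
    Commute v ⁅e, f⁆ := by
  rw [commute_iff_eq, Ring.lie_def, mul_sub, sub_mul, mul_assoc e, mul_assoc f, hve, hvf, mul_neg,
    mul_neg, ← mul_assoc, ← mul_assoc, ← mul_assoc, ← mul_assoc, hve, hvf, neg_mul, neg_mul,
    neg_neg, neg_neg]

end HyperbolicPair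

section HyperbolicPlane

open CliffordAlgebra QuadraticMap

/-- The hyperbolic plane `H = R ⊕ R` with the form `(a, b) ↦ ab`. -/
def hyperbolicPlane (R : Type*) [CommRing R] : QuadraticForm R (R × R) :=
  linMulLin (LinearMap.fst R R R) (LinearMap.snd R R R)

variable {R M : Type*} [CommRing R] [AddCommGroup M] [Module R M] (Q : QuadraticForm R M)

theorem commute_cliffordHom {B : Type*} [Semiring B] [Algebra R B]
    {g : CliffordAlgebra Q →ₐ[R] B} {b : B} (hb : ∀ m, Commute (g (ι Q m)) b)
    (c : CliffordAlgebra Q) : Commute (g c) b := by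
  induction c using CliffordAlgebra.induction with
  | algebraMap r => simpa using Algebra.commute_algebraMap_left r b
  | ι m => exact hb m
  | mul x y hx hy => simpa using hx.mul_left hy
  | add x y hx hy => simpa using hx.add_left hy

/-- The orthogonal sum `H ⊥ Q` of a quadratic form with a hyperbolic plane. -/
abbrev addPlane : QuadraticForm R ((R × R) × M) :=
  (hyperbolicPlane R).prod Q

/-- The first null vector `e` of the hyperbolic plane, as an element of `Cl(H ⊥ Q)`. -/
def planeE : CliffordAlgebra (addPlane Q) :=
  ι (addPlane Q) ((1, 0), 0)

/-- The second null vector `f` of the hyperbolic plane, as an element of `Cl(H ⊥ Q)`. -/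
def planeF : CliffordAlgebra (addPlane Q) :=
  ι (addPlane Q) ((0, 1), 0)

theorem isHyperbolicPair_plane : IsHyperbolicPair (planeE Q) (planeF Q) where
  mul_self_left := by simp [planeE, hyperbolicPlane]
  mul_self_right := by simp [planeF, hyperbolicPlane]
  mul_add_swap := by simp [planeE, planeF, ι_mul_ι_add_swap, hyperbolicPlane, polar]

theorem ι_addPlane_apply (a b : R) (m : M) :
    ι (addPlane Q) ((a, b), m) = a • planeE Q + b • planeF Q + ι (addPlane Q) (0, m) := by
  simp only [planeE, planeF, ← map_smul, ← map_add]
  simp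

theorem planeE_mul_ι (m : M) :
    planeE Q * ι (addPlane Q) (0, m) = -(ι (addPlane Q) (0, m) * planeE Q) :=
  ι_mul_ι_comm_of_isOrtho (.inl_inr _ m)

theorem planeF_mul_ι (m : M) :
    planeF Q * ι (addPlane Q) (0, m) = -(ι (addPlane Q) (0, m) * planeF Q) :=
  ι_mul_ι_comm_of_isOrtho (.inl_inr _ m)

/-- The algebra map `Cl(Q) → Cl(H ⊥ Q)` extending `m ↦ m · ⁅e, f⁆`. The twist by `⁅e, f⁆` makes its
range commute with `e` and `f`, with which the vectors `m` themselves anticommute. -/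
def twistedMap : CliffordAlgebra Q →ₐ[R] CliffordAlgebra (addPlane Q) :=
  lift Q ⟨LinearMap.mulRight R ⁅planeE Q, planeF Q⁆ ∘ₗ ι (addPlane Q) ∘ₗ LinearMap.inr R (R × R) M,
    fun m => by
      have hcomm := commute_lie_of_anticommute (planeE_mul_ι Q m) (planeF_mul_ι Q m)
      simp [hcomm.symm.mul_mul_mul_comm, (isHyperbolicPair_plane Q).lie_mul_lie]⟩

theorem twistedMap_ι (m : M) :
    twistedMap Q (ι Q m) = ι (addPlane Q) (0, m) * ⁅planeE Q, planeF Q⁆ :=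
  lift_ι_apply _ _ m

theorem commute_twistedMap_planeE (c : CliffordAlgebra Q) :
    Commute (twistedMap Q c) (planeE Q) :=
  commute_cliffordHom Q (fun m => twistedMap_ι Q m ▸
    (isHyperbolicPair_plane Q).commute_mul_lie_left (planeE_mul_ι Q m)) c

theorem commute_twistedMap_planeF (c : CliffordAlgebra Q) :
    Commute (twistedMap Q c) (planeF Q) :=
  commute_cliffordHom Q (fun m => twistedMap_ι Q m ▸
    (isHyperbolicPair_plane Q).commute_mul_lie_right (planeF_mul_ι Q m)) c

/-- The algebra map `M₂(Cl(Q)) → Cl(H ⊥ Q)` sending the standard matrix units to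
`ef`, `e`, `f`, `fe`. -/
def matrixToClifford :
    Matrix (Fin 2) (Fin 2) (CliffordAlgebra Q) →ₐ[R] CliffordAlgebra (addPlane Q) :=
  matrixUnitsLift (twistedMap Q) (isHyperbolicPair_plane Q).isMatrixUnits fun c => by
    have hE := commute_twistedMap_planeE Q c
    have hF := commute_twistedMap_planeF Q c
    simp [Fin.forall_fin_two, hE, hF, hE.mul_right hF, hF.mul_right hE]

theorem matrixToClifford_eq_ι (a b : R) (m : M) :
    matrixToClifford Q !![ι Q m, algebraMap R _ a; algebraMap R _ b, -ι Q m] =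
      ι (addPlane Q) ((a, b), m) := by
  have untwist : twistedMap Q (ι Q m) * ⁅planeE Q, planeF Q⁆ = ι (addPlane Q) (0, m) := by
    rw [twistedMap_ι, mul_assoc, (isHyperbolicPair_plane Q).lie_mul_lie, mul_one]
  rw [ι_addPlane_apply, ← untwist, Ring.lie_def, matrixToClifford, matrixUnitsLift_apply]
  simp only [of_apply, cons_val', cons_val_fin_one, Fin.sum_univ_two, Fin.isValue, cons_val_zero,
    cons_val_one, AlgHom.commutes, map_neg, neg_mul, Algebra.smul_def, mul_sub]
  abel

theorem matrixToClifford_surjective : Function.Surjective (matrixToClifford Q) := by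
  rw [← AlgHom.range_eq_top, eq_top_iff, ← adjoin_range_ι, Algebra.adjoin_le_iff]
  rintro _ ⟨⟨⟨a, b⟩, m⟩, rfl⟩
  exact ⟨_, matrixToClifford_eq_ι Q a b m⟩

theorem cliffordHom_injective_addPlane {D : Type*} [Semiring D] [Algebra R D]
    (hQ : ∀ g : CliffordAlgebra Q →ₐ[R] D, Function.Injective g)
    (g : CliffordAlgebra (addPlane Q) →ₐ[R] D) : Function.Injective g := by
  have g_comp_injective : Function.Injective (g.comp (matrixToClifford Q)) :=
    matrixHom_injective_of_comp_scalar (g.comp (matrixToClifford Q)).toRingHom <|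
      hQ ((g.comp (matrixToClifford Q)).comp (scalarAlgHom (Fin 2) R))
  exact Function.Injective.of_comp_right g_comp_injective (matrixToClifford_surjective Q)

theorem cliffordHom_injective_of_subsingleton [Subsingleton M] {D : Type*} [Semiring D]
    [Algebra R D] (hD : Function.Injective (algebraMap R D)) (g : CliffordAlgebra Q →ₐ[R] D) :
    Function.Injective g := by
  have algebraMap_surjective : Function.Surjective (algebraMap R (CliffordAlgebra Q)) := by
    rw [Algebra.surjective_algebraMap_iff, ← adjoin_range_ι, ← le_bot_iff,
      Algebra.adjoin_le_iff]
    rintro _ ⟨m, rfl⟩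
    rw [Subsingleton.elim m 0, map_zero]
    exact zero_mem _
  refine Function.Injective.of_comp_right ?_ algebraMap_surjective
  simpa [Function.comp_def] using hD

end HyperbolicPlane

section HypForm

variable {R : Type} [CommRing R] {n : ℕ}

theorem hypForm_apply (x : (Fin n → R) × (Fin n → R)) : hypForm R n x = x.1 ⬝ᵥ x.2 :=
  rfl

variable (R n) in
/-- The isometry `H ⊥ Hⁿ ≃ Hⁿ⁺¹` pairing up the first coordinates of the two summands. -/
def hypFormSuccIsometry : (addPlane (hypForm R n)).IsometryEquiv (hypForm R (n + 1)) where
  __ := (LinearEquiv.prodProdProdComm R R R (Fin n → R) (Fin n → R)).trans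
    ((Fin.consLinearEquiv R fun _ => R).prodCongr (Fin.consLinearEquiv R fun _ => R))
  map_app' x := by
    simp [hypForm_apply, hyperbolicPlane, dotProduct, Fin.sum_univ_succ]

theorem clifford_embedding_injective_general {D : Type*} [Semiring D] [Algebra R D]
    (hD : Function.Injective (algebraMap R D)) (Φ : CliffordAlgebra (hypForm R n) →ₐ[R] D) :
    Function.Injective Φ := by
  induction n with
  | zero => exact cliffordHom_injective_of_subsingleton (hypForm R 0) hD Φ
  | succ n ih =>
    let split := CliffordAlgebra.equivOfIsometry (hypFormSuccIsometry R n)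
    have comp_injective : Function.Injective (Φ.comp split.toAlgHom) :=
      cliffordHom_injective_addPlane (hypForm R n) ih _
    exact Function.Injective.of_comp_right comp_injective split.surjective

end HypForm

theorem algebraMap_matrix_injective {R A n : Type*} [CommSemiring R] [Semiring A] [Algebra R A]
    [Fintype n] [DecidableEq n] [Nonempty n] (hA : Function.Injective (algebraMap R A)) :
    Function.Injective (algebraMap R (Matrix n n A)) := fun _ _ h =>
  hA (scalar_inj.mp h)

/-- if `R ↪ A`, `ι : R^n ⊕ R^n → A` is an injective linear map and `α` is an
isometry of the hyperbolic form with `ι(x)·ι(α x) = ι(α x)·ι(x) = q(x)·1`, then the algebra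
homomorphism `Cl → M_2(A)` extending `x ↦ [[0, ι x], [ι (α x), 0]]` is injective. -/
theorem clifford_embedding_injective (R : Type) [CommRing R] (n : ℕ) (hn : 1 ≤ n)
    (A : Type) [Ring A] [Algebra R A] (hA : Function.Injective (algebraMap R A))
    (emb : ((Fin n → R) × (Fin n → R)) →ₗ[R] A) (hemb : Function.Injective emb)
    (α : ((Fin n → R) × (Fin n → R)) ≃ₗ[R] ((Fin n → R) × (Fin n → R)))
    (hα : ∀ x, hypForm R n (α x) = hypForm R n x)
    (hmul : ∀ x, emb x * emb (α x) = algebraMap R A (hypForm R n x) ∧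
      emb (α x) * emb x = algebraMap R A (hypForm R n x))
    (Φ : CliffordAlgebra (hypForm R n) →ₐ[R] Matrix (Fin 2) (Fin 2) A)
    (hΦ : ∀ x, Φ (CliffordAlgebra.ι (hypForm R n) x) = !![0, emb x; emb (α x), 0]) :
    Function.Injective Φ := by
  exact clifford_embedding_injective_general (algebraMap_matrix_injective hA) Φ
end
end
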